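/- arXiv:1504.02828 — 2 statements merged into one kernel-verified Lean document; each statement's English description precedes it below -/
import Mathlib

section
/- Let λ be a k-strict partition of length r with characteristic index χ, and let r' be the smallest even integer with r' ≥ r (set λ_{r'} = 0 and d^I_{r'} = 0 when r is odd). Then in the field of rational functions ℚ(β, t_1, …, t_r): t_1^{λ_1} ⋯ t_r^{λ_r} · ∏_{(i,j)∈Δ_r}(1 − t̄_i/t̄_j) / ∏_{(i,j)∈C(λ)}(1 − t_i/t̄_j) = Σ_{I ⊂ D(λ)_r} Pf( Λ^I_{i,j} )_{1≤i<j≤r'}, where Λ^I_{i,j} := t_i^{λ_i+d_i^I} · t_j^{λ_j+d_j^I} · F^I_{i,j}(t) for 1 ≤ i < j ≤ r, and, when r is odd (so r' = r+1), Λ^I_{i,r+1} := t_i^{λ_i+d_i^I} · F^I_i(t) for 1 ≤ i ≤ r. -/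
open MvPolynomial

namespace Stmt7

/-- The field of rational functions `ℚ(β, t_1, …, t_r)`. -/
abbrev K (r : ℕ) := FractionRing (MvPolynomial (Option (Fin r)) ℚ)

noncomputable def β (r : ℕ) : K r :=
  algebraMap (MvPolynomial (Option (Fin r)) ℚ) (K r) (X none)

noncomputable def t {r : ℕ} (i : Fin r) : K r :=
  algebraMap (MvPolynomial (Option (Fin r)) ℚ) (K r) (X (some i))

/-- `t_i` for `ℕ`-indices (`0` beyond `r`). -/
noncomputable def tN (r : ℕ) (i : ℕ) : K r := if h : i < r then t ⟨i, h⟩ else 0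

/-- `t̄ = -t/(1+βt)`. -/
noncomputable def tbar {r : ℕ} (i : Fin r) : K r := -t i / (1 + β r * t i)

noncomputable def tbarN (r : ℕ) (i : ℕ) : K r := -tN r i / (1 + β r * tN r i)

/-- `λ_i` for `ℕ`-indices (`0` beyond `r`). -/
def lamN {r : ℕ} (lam : Fin r → ℕ) (i : ℕ) : ℕ := if h : i < r then lam ⟨i, h⟩ else 0

/-- The characteristic index `χ_j = #{i<j : λ_i+λ_j > 2k+j-i} + λ_j - k - j`
(`0`-indexed `j`; positions are `1`-indexed as in the paper). -/
def chi {r : ℕ} (k : ℕ) (lam : Fin r → ℕ) (j : Fin r) : ℤ :=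
  ((Finset.univ.filter fun i : Fin r =>
      i < j ∧ 2 * (k : ℤ) + ((j : ℕ) : ℤ) - ((i : ℕ) : ℤ) < (lam i : ℤ) + (lam j : ℤ)).card : ℤ)
    + (lam j : ℤ) - (k : ℤ) - ((j : ℕ) + 1 : ℕ)

/-- `Δ_r = {(i,j) : i < j}`. -/
def Delta (r : ℕ) : Finset (Fin r × Fin r) :=
  Finset.univ.filter fun p : Fin r × Fin r => p.1 < p.2

/-- `C(λ) = {(i,j) ∈ Δ_r : χ_i + χ_j ≥ 0}`. -/
def Cset {r : ℕ} (k : ℕ) (lam : Fin r → ℕ) : Finset (Fin r × Fin r) :=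
  (Delta r).filter fun p => 0 ≤ chi k lam p.1 + chi k lam p.2

/-- `D(λ)_r = {(i,j) ∈ Δ_r : χ_i + χ_j < 0}`. -/
def Dset {r : ℕ} (k : ℕ) (lam : Fin r → ℕ) : Finset (Fin r × Fin r) :=
  (Delta r).filter fun p => chi k lam p.1 + chi k lam p.2 < 0

/-- `a_i^I = #{j : (i,j) ∈ I}` (`ℕ`-indexed). -/
def aI {r : ℕ} (I : Finset (Fin r × Fin r)) (i : ℕ) : ℕ :=
  (I.filter fun p => ((p.1 : ℕ) = i)).card

/-- `c_i^I = #{j : (j,i) ∈ I}` (`ℕ`-indexed). -/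
def cI {r : ℕ} (I : Finset (Fin r × Fin r)) (i : ℕ) : ℕ :=
  (I.filter fun p => ((p.2 : ℕ) = i)).card

/-- `d_i^I = a_i^I - c_i^I`. -/
def dI {r : ℕ} (I : Finset (Fin r × Fin r)) (i : ℕ) : ℤ := (aI I i : ℤ) - (cI I i : ℤ)

/-- The rational function `F^I_{i,j}(t)` (`0`-indexed `i < j`, `r'` even). -/
noncomputable def F {r : ℕ} (r' : ℕ) (I : Finset (Fin r × Fin r)) (i j : ℕ) : K r :=
  (1 + β r * tN r i) ^ ((i : ℤ) + (cI I i : ℤ) + 2 - (r' : ℤ)) *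
    (1 + β r * tN r j) ^ ((j : ℤ) + (cI I j : ℤ) + 1 - (r' : ℤ)) *
    ((1 - tbarN r i / tbarN r j) / (1 - tN r i / tbarN r j))

/-- The rational function `F^I_i(t)`. -/
noncomputable def Fi {r : ℕ} (r' : ℕ) (I : Finset (Fin r × Fin r)) (i : ℕ) : K r :=
  (1 + β r * tN r i) ^ ((i : ℤ) + (cI I i : ℤ) + 2 - (r' : ℤ))

/-- The Pfaffian entry `Λ^I_{i,j}`, where the last column is the special one when `r` is
odd (i.e. when `j = r' - 1 = r`). -/
noncomputable def Lam {r : ℕ} (r' : ℕ) (lam : Fin r → ℕ) (I : Finset (Fin r × Fin r))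
    (i j : ℕ) : K r :=
  if j < r then
    tN r i ^ ((lamN lam i : ℤ) + dI I i) * tN r j ^ ((lamN lam j : ℤ) + dI I j) *
      F r' I i j
  else tN r i ^ ((lamN lam i : ℤ) + dI I i) * Fi r' I i

/-- The skew-symmetric matrix determined by its above-diagonal entries. -/
def skew {N : ℕ} {K : Type*} [Field K] (f : Fin N → Fin N → K) : Fin N → Fin N → K :=
  fun i j => if i < j then f i j else if j < i then -f j i else 0

/-- The Pfaffian of a `2n × 2n` skew-symmetric matrix, via
`Pf(A) = (2^n n!)⁻¹ Σ_{σ ∈ S_{2n}} sgn(σ) ∏_{i=1}^{n} A_{σ(2i-1), σ(2i)}`. -/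
noncomputable def pf {K : Type*} [Field K] (n : ℕ) (A : Fin (2 * n) → Fin (2 * n) → K) :
    K :=
  (((2 ^ n * n.factorial : ℕ) : K))⁻¹ *
    ∑ σ : Equiv.Perm (Fin (2 * n)),
      ((Equiv.Perm.sign σ : ℤ) : K) *
        ∏ i : Fin n,
          A (σ ⟨2 * (i : ℕ), by have := i.isLt; omega⟩)
            (σ ⟨2 * (i : ℕ) + 1, by have := i.isLt; omega⟩)

/-!
Put `x_i = β + 2 / t_i` and `S(x, y) = (x - y) / (x + y)`. Then
`(1 - t̄_i / t̄_j) / (1 - t_i / t̄_j) = (1 + β t_i)⁻¹ S(x_i, x_j)` and `1 + β t_i = S(x_i, -β)`, so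
up to row and column factors every matrix `Λ^I` is a Schur matrix `S(x_i, x_j)`, the extra column
for odd `r` being the one with `x_{r+1} = -β`. Schur's Pfaffian
`Pf S(x_i, x_j) = ∏_{i < j} S(x_i, x_j)` therefore evaluates each summand, and the row factors that
depend on `I` multiply to `∏_{(i,j) ∈ I} (-t_i / t̄_j)`; the sum over `I ⊂ D` is then
`∏_{(i,j) ∈ D} (1 - t_i / t̄_j)`.

Schur's Pfaffian itself is proved by dividing the sum over permutations by the antisymmetric product
`∏_{i < j} S(x_i, x_j)`: this removes the signs, and the remaining sum is computed by peeling off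
one pair at a time with a Lagrange interpolation identity.
-/

section SchurKernel

variable {𝕜 : Type*} [Field 𝕜]

/-- The kernel `S(x, y) = (x - y) / (x + y)` whose Pfaffian Schur evaluated. -/
def schurKernel (x y : 𝕜) : 𝕜 := (x - y) / (x + y)

lemma schurKernel_neg_swap (x y : 𝕜) : schurKernel x y = -schurKernel y x := by
  rw [schurKernel, schurKernel, ← neg_div, neg_sub, add_comm]

lemma schurKernel_inv (x y : 𝕜) : (schurKernel x y)⁻¹ = (x + y) / (x - y) := inv_div _ _

/-- The condition on a family under which all `S(x i, x j)` with `i ≠ j` are defined and nonzero.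
The sums `x i + x i` are included, so that in characteristic other than two `x i ≠ 0`. -/
structure Generic {ι : Type*} (x : ι → 𝕜) : Prop where
  injective : Function.Injective x
  add_ne_zero : ∀ i j, x i + x j ≠ 0

lemma Generic.comp {ι κ : Type*} {x : ι → 𝕜} (hx : Generic x) {f : κ → ι}
    (hf : Function.Injective f) : Generic (x ∘ f) :=
  ⟨hx.injective.comp hf, fun i j => hx.add_ne_zero (f i) (f j)⟩

lemma Generic.schurKernel_ne_zero {ι : Type*} {x : ι → 𝕜} (hx : Generic x) {i j : ι}
    (hij : i ≠ j) : schurKernel (x i) (x j) ≠ 0 :=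
  div_ne_zero (sub_ne_zero.2 (hx.injective.ne hij)) (hx.add_ne_zero i j)

lemma Generic.snoc {m : ℕ} {x : Fin m → 𝕜} (hx : Generic x) {a : 𝕜} (haa : a + a ≠ 0)
    (hne : ∀ i, x i ≠ a) (hadd : ∀ i, x i + a ≠ 0) :
    Generic (Fin.snoc (α := fun _ => 𝕜) x a) where
  injective := Fin.snoc_injective_iff.2 ⟨hx.injective, fun ⟨i, hi⟩ => hne i hi⟩
  add_ne_zero := by
    simp only [Fin.forall_fin_succ', Fin.snoc_castSucc, Fin.snoc_last]
    exact ⟨fun i => ⟨hx.add_ne_zero i, hadd i⟩, fun j => add_comm a (x j) ▸ hadd j, haa⟩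

end SchurKernel

section LagrangeIdentities

variable {𝕜 : Type*} [Field 𝕜] [DecidableEq 𝕜]

/- Lagrange interpolation of `∏ c ∈ s, (X + c)` at the nodes `s ∪ {0}`: compare leading
coefficients. -/
lemma two_mul_sum_prod_erase_add_div_sub (s : Finset 𝕜) (h0 : (0 : 𝕜) ∉ s) :
    2 * ∑ a ∈ s, ∏ c ∈ s.erase a, (a + c) / (a - c) = 1 - (-1) ^ s.card := by
  set P : Polynomial 𝕜 := ∏ c ∈ s, (Polynomial.X + Polynomial.C c) with hP
  have hmonic : P.Monic := Polynomial.monic_prod_of_monic _ _ fun c _ => Polynomial.monic_X_add_C c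
  have hdegree : P.degree = s.card := by
    simp only [hP, Polynomial.degree_prod, Polynomial.degree_X_add_C, Finset.sum_const,
      nsmul_eq_mul, mul_one]
  have heval (a : 𝕜) : P.eval a = ∏ c ∈ s, (a + c) := by
    simp only [hP, Polynomial.eval_prod, Polynomial.eval_add, Polynomial.eval_X, Polynomial.eval_C]
  have hlead := Lagrange.leadingCoeff_eq_sum (s := insert 0 s) (v := id) (P := P)
    Function.injective_id.injOn (by rw [hdegree, Finset.card_insert_of_notMem h0, Nat.cast_succ])
  have hzero : P.eval 0 / ∏ c ∈ s, (0 - c) = (-1) ^ s.card := by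
    simp only [heval, zero_add, zero_sub, ← Finset.prod_div_distrib]
    refine Finset.prod_eq_pow_card fun c hc => ?_
    rw [div_neg, div_self (ne_of_mem_of_not_mem hc h0)]
  have hnode (a : 𝕜) (ha : a ∈ s) : P.eval a / ∏ c ∈ (insert 0 s).erase a, (a - c) =
      2 * ∏ c ∈ s.erase a, (a + c) / (a - c) := by
    have ha0 : a ≠ 0 := ne_of_mem_of_not_mem ha h0
    rw [Finset.erase_insert_of_ne ha0.symm,
      Finset.prod_insert fun h => h0 (Finset.mem_of_mem_erase h), heval,
      ← Finset.mul_prod_erase s _ ha, sub_zero, ← two_mul, mul_div_mul_comm, mul_div_assoc,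
      div_self ha0, mul_one, Finset.prod_div_distrib]
  simp only [hmonic.leadingCoeff, Finset.sum_insert h0, Finset.erase_insert h0, id_eq] at hlead
  rw [hzero, Finset.sum_congr rfl hnode, ← Finset.mul_sum] at hlead
  linear_combination -hlead

/- The previous identity for the set `s ∪ {-y}`, of even cardinality. -/
lemma sum_schurKernel_mul_prod_erase [NeZero (2 : 𝕜)] {s : Finset 𝕜} (hs : Odd s.card) {y : 𝕜}
    (h : ∀ a ∈ insert y s, ∀ b ∈ insert y s, a + b ≠ 0) :
    ∑ a ∈ s, schurKernel y a * ∏ c ∈ s.erase a, (schurKernel a c)⁻¹ =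
      ∏ c ∈ s, schurKernel y c := by
  have hneg : -y ∉ s := fun hy => h y (Finset.mem_insert_self y s) (-y)
    (Finset.mem_insert_of_mem hy) (add_neg_cancel y)
  have h0 : (0 : 𝕜) ∉ insert (-y) s := fun h0 => by
    rcases Finset.mem_insert.1 h0 with hy | hy
    · exact h y (Finset.mem_insert_self y s) y (Finset.mem_insert_self y s)
        (by rw [neg_eq_zero.1 hy.symm, add_zero])
    · exact h 0 (Finset.mem_insert_of_mem hy) 0 (Finset.mem_insert_of_mem hy) (add_zero 0)
  have hsum := two_mul_sum_prod_erase_add_div_sub _ h0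
  rw [Finset.card_insert_of_notMem hneg, hs.add_one.neg_one_pow, sub_self,
    mul_eq_zero_iff_left two_ne_zero, Finset.sum_insert hneg, Finset.erase_insert hneg] at hsum
  have hhead : ∏ c ∈ s, (-y + c) / (-y - c) = ∏ c ∈ s, schurKernel y c :=
    Finset.prod_congr rfl fun c _ => by
      rw [schurKernel, ← neg_div_neg_eq]; congr 1 <;> ring
  have htail (a : 𝕜) (ha : a ∈ s) : ∏ c ∈ (insert (-y) s).erase a, (a + c) / (a - c) =
      -(schurKernel y a * ∏ c ∈ s.erase a, (schurKernel a c)⁻¹) := by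
    rw [Finset.erase_insert_of_ne (ne_of_mem_of_not_mem ha hneg).symm,
      Finset.prod_insert fun h => hneg (Finset.mem_of_mem_erase h), ← neg_mul,
      ← schurKernel_neg_swap, schurKernel, sub_neg_eq_add, ← sub_eq_add_neg]
    simp only [schurKernel_inv]
  rw [hhead, Finset.sum_congr rfl htail, Finset.sum_neg_distrib] at hsum
  linear_combination -hsum

lemma sum_prod_erase_schurKernel_inv [NeZero (2 : 𝕜)] {s : Finset 𝕜} (hs : Odd s.card) {y : 𝕜}
    (hy : y ∉ s) (h : ∀ a ∈ insert y s, ∀ b ∈ insert y s, a + b ≠ 0) :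
    ∑ a ∈ s, ∏ c ∈ s.erase a, ((schurKernel y c)⁻¹ * (schurKernel a c)⁻¹) = 1 := by
  have hne (c : 𝕜) (hc : c ∈ s) : schurKernel y c ≠ 0 :=
    div_ne_zero (sub_ne_zero.2 (ne_of_mem_of_not_mem hc hy).symm)
      (h y (Finset.mem_insert_self y s) c (Finset.mem_insert_of_mem hc))
  rw [← div_self (Finset.prod_ne_zero_iff.2 hne)]
  nth_rw 1 [← sum_schurKernel_mul_prod_erase hs h]
  rw [Finset.sum_div]
  refine Finset.sum_congr rfl fun a ha => ?_
  rw [← Finset.mul_prod_erase s _ ha, mul_div_mul_left _ _ (hne a ha), Finset.prod_mul_distrib,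
    Finset.prod_inv_distrib, inv_mul_eq_div]

end LagrangeIdentities

lemma sum_prod_succAbove_schurKernel_inv {𝕜 : Type*} [Field 𝕜] [NeZero (2 : 𝕜)] {n : ℕ}
    (hn : Even n) {x : Fin (n + 2) → 𝕜} (hx : Generic x) (p : Fin (n + 2)) :
    ∑ q, ∏ j, ((schurKernel (x p) (p.removeNth x (q.succAbove j)))⁻¹ *
      (schurKernel (p.removeNth x q) (p.removeNth x (q.succAbove j)))⁻¹) = 1 := by
  classical
  let e : Fin (n + 1) ↪ 𝕜 := ⟨p.removeNth x, hx.injective.comp Fin.succAbove_right_injective⟩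
  have hmem : ∀ a ∈ insert (x p) (Finset.univ.map e), ∃ i, x i = a := by
    simp only [Finset.forall_mem_insert, Finset.forall_mem_map]
    exact ⟨⟨p, rfl⟩, fun q _ => ⟨p.succAbove q, rfl⟩⟩
  have hp : x p ∉ Finset.univ.map e := by
    simp only [Finset.mem_map, Finset.mem_univ, true_and, not_exists]
    exact fun q hq => p.succAbove_ne q (hx.injective hq)
  rw [← sum_prod_erase_schurKernel_inv (s := Finset.univ.map e) (by simpa using hn.add_one) hp]
  · simp only [Finset.sum_map, ← Finset.map_erase, Finset.prod_map]
    refine Finset.sum_congr rfl fun q _ => ?_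
    rw [← Finset.compl_singleton, ← Fin.image_succAbove_univ,
      Finset.prod_image Fin.succAbove_right_injective.injOn]
    rfl
  · intro a ha b hb
    obtain ⟨i, rfl⟩ := hmem a ha
    obtain ⟨j, rfl⟩ := hmem b hb
    exact hx.add_ne_zero i j

section SchurPfaffian

lemma sum_perm_succ {α M : Type*} [AddCommMonoid M] {m : ℕ} (h : (Fin (m + 1) → α) → M)
    (x : Fin (m + 1) → α) :
    ∑ σ : Equiv.Perm (Fin (m + 1)), h (x ∘ σ) =
      ∑ p, ∑ τ : Equiv.Perm (Fin m), h (Matrix.vecCons (x p) (p.removeNth x ∘ τ)) := by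
  have hswap (p : Fin (m + 1)) : ∃ ρ : Equiv.Perm (Fin m),
      ∀ j, Equiv.swap 0 p j.succ = p.succAbove (ρ j) := by
    cases p using Fin.cases with
    | zero => exact ⟨1, fun j => by simp⟩
    | succ i => cases m with
      | zero => exact i.elim0
      | succ m => exact ⟨i.cycleRange, fun j => (Fin.succAbove_cycleRange i j).symm⟩
  rw [← Equiv.sum_comp Equiv.Perm.decomposeFin.symm, Fintype.sum_prod_type]
  refine Finset.sum_congr rfl fun p _ => ?_
  obtain ⟨ρ, hρ⟩ := hswap p
  rw [← Equiv.sum_comp (Equiv.mulLeft ρ⁻¹)]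
  refine Finset.sum_congr rfl fun τ _ => congrArg h (funext (Fin.cases ?_ fun j => ?_))
  · simp
  · simp [hρ, Fin.removeNth]

variable {𝕜 : Type*} [Field 𝕜]

/-- The product `∏_{i < j} S(x i, x j)`, the value of Schur's Pfaffian. -/
def schurProd {m : ℕ} (x : Fin m → 𝕜) : 𝕜 := ∏ i, ∏ j ∈ Finset.Ioi i, schurKernel (x i) (x j)

lemma schurProd_vecCons {m : ℕ} (a : 𝕜) (x : Fin m → 𝕜) :
    schurProd (Matrix.vecCons a x) = (∏ j, schurKernel a (x j)) * schurProd x := by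
  simp only [schurProd, Fin.prod_univ_succ, Fin.prod_Ioi_zero, Fin.prod_Ioi_succ,
    Matrix.cons_val_zero, Matrix.cons_val_succ]

lemma schurProd_vecCons_vecCons {m : ℕ} (a b : 𝕜) (x : Fin m → 𝕜) :
    schurProd (Matrix.vecCons a (Matrix.vecCons b x)) =
      schurKernel a b * (∏ j, schurKernel a (x j) * schurKernel b (x j)) * schurProd x := by
  simp only [schurProd_vecCons, Fin.prod_univ_succ (n := m), Matrix.cons_val_zero,
    Matrix.cons_val_succ, Finset.prod_mul_distrib, mul_assoc]

lemma schurProd_snoc {m : ℕ} (x : Fin m → 𝕜) (a : 𝕜) :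
    schurProd (Fin.snoc (α := fun _ => 𝕜) x a) = (∏ i, schurKernel (x i) a) * schurProd x := by
  have hcomm {k : ℕ} (y : Fin k → 𝕜) :
      schurProd y = ∏ j, ∏ i ∈ Finset.Iio j, schurKernel (y i) (y j) :=
    Finset.prod_comm' (by simp)
  simp only [hcomm, Fin.prod_univ_castSucc, Fin.prod_Iio_castSucc, Fin.snoc_castSucc,
    Fin.snoc_last, Fin.Iio_last_eq_map, Finset.prod_map, Fin.coe_castSuccEmb, mul_comm]

lemma schurProd_comp_perm {m : ℕ} (x : Fin m → 𝕜) (σ : Equiv.Perm (Fin m)) :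
    schurProd (x ∘ σ) = ((Equiv.Perm.sign σ : ℤ) : 𝕜) * schurProd x :=
  Equiv.Perm.prod_Ioi_comp_eq_sign_mul_prod σ (f := fun i j => schurKernel (x i) (x j))
    fun _ _ => schurKernel_neg_swap _ _

lemma Generic.schurProd_ne_zero {m : ℕ} {x : Fin m → 𝕜} (hx : Generic x) : schurProd x ≠ 0 :=
  Finset.prod_ne_zero_iff.2 fun _ _ => Finset.prod_ne_zero_iff.2 fun _ hj =>
    hx.schurKernel_ne_zero (Finset.mem_Ioi.1 hj).ne

/-- The product of the kernel over the matching `{(0, 1), (2, 3), …}`: the summand of the identity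
permutation in Schur's Pfaffian. -/
def matchingProd (n : ℕ) (x : Fin (2 * n) → 𝕜) : 𝕜 :=
  ∏ i : Fin n, schurKernel (x ⟨2 * i, by lia⟩) (x ⟨2 * i + 1, by lia⟩)

lemma matchingProd_vecCons_vecCons (n : ℕ) (a b : 𝕜) (x : Fin (2 * n) → 𝕜) :
    matchingProd (n + 1) (Matrix.vecCons a (Matrix.vecCons b x)) =
      schurKernel a b * matchingProd n x := by
  rw [matchingProd, Fin.prod_univ_succ]
  rfl

/-- The summand of a permutation in Schur's Pfaffian divided by the value of the Pfaffian. The signs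
of the permutation cancel, so only the argument has to be permuted. -/
def schurRatio (n : ℕ) (x : Fin (2 * n) → 𝕜) : 𝕜 := matchingProd n x / schurProd x

lemma schurRatio_vecCons_vecCons (n : ℕ) {a b : 𝕜} (hab : schurKernel a b ≠ 0)
    (x : Fin (2 * n) → 𝕜) :
    schurRatio (n + 1) (Matrix.vecCons a (Matrix.vecCons b x)) =
      (∏ j, ((schurKernel a (x j))⁻¹ * (schurKernel b (x j))⁻¹)) * schurRatio n x := by
  refine (congrArg₂ (· / ·) (matchingProd_vecCons_vecCons n a b x)
    (schurProd_vecCons_vecCons a b x)).trans ?_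
  simp only [← mul_inv, Finset.prod_inv_distrib, schurRatio]
  rw [mul_assoc, mul_div_mul_left _ _ hab, div_mul_eq_div_div_swap, div_eq_inv_mul]

lemma sum_perm_schurRatio_vecCons_vecCons (n : ℕ) {a b : 𝕜} (hab : schurKernel a b ≠ 0)
    (x : Fin (2 * n) → 𝕜) :
    ∑ τ : Equiv.Perm (Fin (2 * n)),
        schurRatio (n + 1) (Matrix.vecCons a (Matrix.vecCons b (x ∘ τ))) =
      (∏ j, ((schurKernel a (x j))⁻¹ * (schurKernel b (x j))⁻¹)) *
        ∑ τ : Equiv.Perm (Fin (2 * n)), schurRatio n (x ∘ τ) := by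
  simp only [schurRatio_vecCons_vecCons n hab, Finset.mul_sum]
  exact Finset.sum_congr rfl fun τ _ => congrArg (· * _)
    (Equiv.prod_comp τ fun j => (schurKernel a (x j))⁻¹ * (schurKernel b (x j))⁻¹)

lemma sum_perm_schurRatio_succ [NeZero (2 : 𝕜)] (n : ℕ) {x : Fin (2 * n + 2) → 𝕜}
    (hx : Generic x) {s : 𝕜}
    (hs : ∀ y : Fin (2 * n) → 𝕜, Generic y →
      ∑ τ : Equiv.Perm (Fin (2 * n)), schurRatio n (y ∘ τ) = s) :
    ∑ σ : Equiv.Perm (Fin (2 * n + 2)), schurRatio (n + 1) (x ∘ σ) = (2 * n + 2 : ℕ) * s := by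
  have hpair (p : Fin (2 * n + 2)) (q : Fin (2 * n + 1)) :
      ∑ τ : Equiv.Perm (Fin (2 * n)), schurRatio (n + 1) (Matrix.vecCons (x p)
        (Matrix.vecCons (p.removeNth x q) (q.removeNth (p.removeNth x) ∘ τ))) =
      (∏ j, ((schurKernel (x p) (p.removeNth x (q.succAbove j)))⁻¹ *
        (schurKernel (p.removeNth x q) (p.removeNth x (q.succAbove j)))⁻¹)) * s := by
    have hrest : Generic (q.removeNth (p.removeNth x)) :=
      hx.comp (Fin.succAbove_right_injective.comp Fin.succAbove_right_injective)
    refine (sum_perm_schurRatio_vecCons_vecCons n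
      (hx.schurKernel_ne_zero (p.succAbove_ne q).symm) _).trans ?_
    rw [hs _ hrest]
    rfl
  have hfirst (p : Fin (2 * n + 2)) : ∑ τ : Equiv.Perm (Fin (2 * n + 1)),
      schurRatio (n + 1) (Matrix.vecCons (x p) (p.removeNth x ∘ τ)) = s := by
    refine (sum_perm_succ (m := 2 * n)
      (fun y => schurRatio (n + 1) (Matrix.vecCons (x p) y)) (p.removeNth x)).trans ?_
    rw [Finset.sum_congr rfl fun q _ => hpair p q, ← Finset.sum_mul,
      sum_prod_succAbove_schurKernel_inv (even_two_mul n) hx, one_mul]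
  refine (sum_perm_succ (m := 2 * n + 1) (schurRatio (n + 1)) x).trans ?_
  rw [Finset.sum_congr rfl fun p _ => hfirst p,
    Finset.sum_const, Finset.card_univ, Fintype.card_fin, nsmul_eq_mul]

lemma sum_perm_schurRatio [NeZero (2 : 𝕜)] (n : ℕ) {x : Fin (2 * n) → 𝕜} (hx : Generic x) :
    ∑ σ : Equiv.Perm (Fin (2 * n)), schurRatio n (x ∘ σ) = (2 ^ n * n.factorial : ℕ) := by
  induction n with
  | zero => simp [schurRatio, matchingProd, schurProd]
  | succ n ih =>
    refine (sum_perm_schurRatio_succ n hx fun y hy => ih hy).trans ?_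
    rw [Nat.factorial_succ, pow_succ]
    push_cast
    ring

lemma prod_pairs {M : Type*} [CommMonoid M] (n : ℕ) (f : Fin (2 * n) → M) :
    ∏ i : Fin n, (f ⟨2 * i, by lia⟩ * f ⟨2 * i + 1, by lia⟩) = ∏ i, f i := by
  induction n with
  | zero => simp
  | succ n ih =>
    refine Eq.trans ?_ (Fin.prod_univ_succ (n := 2 * n + 1) f).symm
    rw [Fin.prod_univ_succ, Fin.prod_univ_succ, ← ih, ← mul_assoc]
    rfl

lemma pf_mul_mul (n : ℕ) (w : Fin (2 * n) → 𝕜) (A : Fin (2 * n) → Fin (2 * n) → 𝕜) :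
    pf n (fun i j => w i * w j * A i j) = (∏ i, w i) * pf n A := by
  have hrow (σ : Equiv.Perm (Fin (2 * n))) :
      ∏ i : Fin n, w (σ ⟨2 * i, by lia⟩) * w (σ ⟨2 * i + 1, by lia⟩) = ∏ i, w i :=
    (prod_pairs n (w ∘ σ)).trans (Equiv.prod_comp σ w)
  simp only [pf, Finset.prod_mul_distrib (f := fun _ => w _ * w _), hrow,
    mul_left_comm _ (∏ i, w i), ← Finset.mul_sum]

variable [CharZero 𝕜]

theorem pf_schurKernel (n : ℕ) {x : Fin (2 * n) → 𝕜} (hx : Generic x) :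
    pf n (fun i j => schurKernel (x i) (x j)) = schurProd x := by
  rw [pf, inv_mul_eq_iff_eq_mul₀ (Nat.cast_ne_zero.2 (by positivity)),
    ← sum_perm_schurRatio n hx, Finset.sum_mul]
  refine Finset.sum_congr rfl fun σ _ => ?_
  have hsign : ((Equiv.Perm.sign σ : ℤ) : 𝕜)⁻¹ = (Equiv.Perm.sign σ : ℤ) := by
    rcases Int.units_eq_one_or (Equiv.Perm.sign σ) with h | h <;> simp [h]
  rw [schurRatio, schurProd_comp_perm, ← div_div, div_mul_cancel₀ _ hx.schurProd_ne_zero,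
    div_eq_inv_mul (matchingProd n _), hsign]
  rfl

lemma skew_eq_of_lt {N : ℕ} {f A : Fin N → Fin N → 𝕜} (hA : ∀ i j, A i j = -A j i)
    (h : ∀ i j, i < j → f i j = A i j) : skew f = A := by
  funext i j
  rcases lt_trichotomy i j with hij | rfl | hij
  · rw [skew, if_pos hij, h i j hij]
  · rw [skew, if_neg (lt_irrefl i), if_neg (lt_irrefl i), self_eq_neg.1 (hA i i)]
  · rw [skew, if_neg hij.not_gt, if_pos hij, h j i hij, ← hA]

lemma pf_skew_schurKernel {n : ℕ} {f : Fin (2 * n) → Fin (2 * n) → 𝕜} {w x : Fin (2 * n) → 𝕜}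
    (hx : Generic x) (h : ∀ i j, i < j → f i j = w i * w j * schurKernel (x i) (x j)) :
    pf n (skew f) = (∏ i, w i) * schurProd x := by
  rw [skew_eq_of_lt (fun i j => ?_) h, pf_mul_mul, pf_schurKernel n hx]
  rw [schurKernel_neg_swap, mul_comm (w i), mul_neg]

lemma pf_skew_schurKernel_snoc {n : ℕ} {f : Fin (2 * n + 1 + 1) → Fin (2 * n + 1 + 1) → 𝕜}
    {w x : Fin (2 * n + 1) → 𝕜} {a : 𝕜} (hx : Generic (Fin.snoc (α := fun _ => 𝕜) x a))
    (h : ∀ i j, f i.castSucc j.castSucc = w i * w j * schurKernel (x i) (x j))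
    (hlast : ∀ i, f i.castSucc (Fin.last _) = w i * schurKernel (x i) a) :
    pf (n + 1) (skew f) = (∏ i, w i * schurKernel (x i) a) * schurProd x := by
  refine (pf_skew_schurKernel (n := n + 1)
    (w := Fin.snoc (n := 2 * n + 1) (α := fun _ => 𝕜) w 1) hx ?_).trans ?_
  · refine Fin.lastCases (n := 2 * n + 1) (fun j hj => absurd hj (Fin.le_last j).not_gt) fun i => ?_
    refine Fin.lastCases (n := 2 * n + 1) (fun _ => ?_) fun j _ => ?_
    · simp only [Fin.snoc_castSucc, Fin.snoc_last, mul_one, hlast]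
    · simp only [Fin.snoc_castSucc, h]
  · have hw : ∏ i, Fin.snoc (α := fun _ => 𝕜) w 1 i = ∏ i, w i := by
      simp only [Fin.prod_univ_castSucc, Fin.snoc_castSucc, Fin.snoc_last, mul_one]
    rw [Finset.prod_mul_distrib, mul_assoc, ← schurProd_snoc]
    exact congrArg (· * _) hw

end SchurPfaffian

section IndexSets

variable {M : Type*} [CommMonoid M] {r : ℕ}

lemma prod_Delta (f : Fin r × Fin r → M) :
    ∏ p ∈ Delta r, f p = ∏ i, ∏ j ∈ Finset.Ioi i, f (i, j) :=
  Finset.prod_finset_product _ _ _ (by simp [Delta])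

lemma prod_pow_aI (I : Finset (Fin r × Fin r)) (f : Fin r → M) :
    ∏ i : Fin r, f i ^ aI I i = ∏ p ∈ I, f p.1 := by
  simp only [← Finset.prod_fiberwise' I Prod.fst f, Finset.prod_const, aI, Fin.val_inj]

lemma prod_pow_cI (I : Finset (Fin r × Fin r)) (f : Fin r → M) :
    ∏ i : Fin r, f i ^ cI I i = ∏ p ∈ I, f p.2 := by
  simp only [← Finset.prod_fiberwise' I Prod.snd f, Finset.prod_const, cI, Fin.val_inj]

lemma Dset_eq_sdiff_Cset (k : ℕ) (lam : Fin r → ℕ) : Dset k lam = Delta r \ Cset k lam := by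
  simp only [Dset, Cset, ← Finset.filter_not, not_le]

end IndexSets

lemma algebraMap_ne_zero_of_eval_ne_zero {σ R : Type*} [CommRing R] {p : MvPolynomial σ R}
    (v : σ → R) (h : eval v p ≠ 0) :
    algebraMap (MvPolynomial σ R) (FractionRing (MvPolynomial σ R)) p ≠ 0 :=
  (map_ne_zero_iff _ (IsFractionRing.injective _ _)).2 fun h0 => h (by rw [h0, map_zero])

section RationalFunctions

variable {r : ℕ}

lemma β_ne_zero (r : ℕ) : β r ≠ 0 := algebraMap_ne_zero_of_eval_ne_zero 1 (by simp)

lemma t_ne_zero (i : Fin r) : t i ≠ 0 := algebraMap_ne_zero_of_eval_ne_zero 1 (by simp)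

lemma t_injective : Function.Injective (t : Fin r → K r) :=
  (IsFractionRing.injective _ _).comp ((X_injective).comp (Option.some_injective _))

lemma one_add_β_mul_t_ne_zero (i : Fin r) : 1 + β r * t i ≠ 0 := by
  have h := algebraMap_ne_zero_of_eval_ne_zero (R := ℚ) (p := 1 + X none * X (some i)) 1
    (by norm_num)
  simpa only [map_add, map_mul, map_one, β, t] using h

lemma t_add_t_add_β_mul_ne_zero (i j : Fin r) : t i + t j + β r * t i * t j ≠ 0 := by
  have h := algebraMap_ne_zero_of_eval_ne_zero (R := ℚ)
    (p := X (some i) + X (some j) + X none * X (some i) * X (some j)) 1 (by norm_num)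
  simpa only [map_add, map_mul, β, t] using h

lemma one_sub_tbar_div_tbar (i j : Fin r) :
    1 - tbar i / tbar j = (t j - t i) / (t j * (1 + β r * t i)) := by
  have hj := t_ne_zero j
  have hi' := one_add_β_mul_t_ne_zero i
  rw [tbar, tbar, div_div_div_eq, neg_mul, mul_neg, neg_div_neg_eq,
    one_sub_div (mul_ne_zero hi' hj), div_eq_div_iff (mul_ne_zero hi' hj) (mul_ne_zero hj hi')]
  ring

lemma neg_t_div_tbar (i j : Fin r) : -(t i / tbar j) = t i * (t j)⁻¹ * (1 + β r * t j) := by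
  rw [tbar, div_div_eq_mul_div, div_neg, neg_neg, div_eq_mul_inv, mul_right_comm]

lemma one_sub_t_div_tbar (i j : Fin r) :
    1 - t i / tbar j = (t i + t j + β r * t i * t j) / t j := by
  have hj := t_ne_zero j
  rw [sub_eq_add_neg, neg_t_div_tbar]
  field_simp
  ring

lemma one_sub_t_div_tbar_ne_zero (i j : Fin r) : 1 - t i / tbar j ≠ 0 := by
  rw [one_sub_t_div_tbar]
  exact div_ne_zero (t_add_t_add_β_mul_ne_zero i j) (t_ne_zero j)

/-- The variable `x_i = β + 2 / t_i` in which the entries of the Pfaffian become Schur kernels. -/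
noncomputable def schurVar (i : Fin r) : K r := β r + 2 / t i

lemma schurVar_add_schurVar (i j : Fin r) :
    schurVar i + schurVar j = 2 * (t i + t j + β r * t i * t j) / (t i * t j) := by
  have hi := t_ne_zero i
  have hj := t_ne_zero j
  rw [schurVar, schurVar]
  field_simp
  ring

lemma schurKernel_schurVar (i j : Fin r) : schurKernel (schurVar i) (schurVar j) =
    (t j - t i) / (t i + t j + β r * t i * t j) := by
  have hi := t_ne_zero i
  have hj := t_ne_zero j
  have hsub : schurVar i - schurVar j = 2 * (t j - t i) / (t i * t j) := by
    rw [schurVar, schurVar]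
    field_simp
    ring
  rw [schurKernel, hsub, schurVar_add_schurVar, div_div_div_cancel_right₀ (mul_ne_zero hi hj),
    mul_div_mul_left _ _ two_ne_zero]

lemma schurKernel_schurVar_neg_β (i : Fin r) :
    schurKernel (schurVar i) (-β r) = 1 + β r * t i := by
  have hi := t_ne_zero i
  rw [schurKernel, schurVar, sub_neg_eq_add, add_neg_cancel_comm]
  field_simp
  ring

lemma one_sub_tbar_div_tbar_div_one_sub_t_div_tbar (i j : Fin r) :
    (1 - tbar i / tbar j) / (1 - t i / tbar j) =
      (1 + β r * t i)⁻¹ * schurKernel (schurVar i) (schurVar j) := by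
  have hj := t_ne_zero j
  rw [one_sub_tbar_div_tbar, one_sub_t_div_tbar, schurKernel_schurVar]
  field_simp

lemma generic_schurVar : Generic (schurVar : Fin r → K r) where
  injective i j h := by
    rw [schurVar, schurVar, add_right_inj, div_eq_mul_inv, div_eq_mul_inv,
      mul_right_inj' two_ne_zero, inv_inj] at h
    exact t_injective h
  add_ne_zero i j := by
    rw [schurVar_add_schurVar]
    exact div_ne_zero (mul_ne_zero two_ne_zero (t_add_t_add_β_mul_ne_zero i j))
      (mul_ne_zero (t_ne_zero i) (t_ne_zero j))

lemma generic_snoc_schurVar_neg_β :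
    Generic (Fin.snoc (α := fun _ => K r) (schurVar : Fin r → K r) (-β r)) := by
  have hne (i : Fin r) : schurKernel (schurVar i) (-β r) ≠ 0 :=
    schurKernel_schurVar_neg_β i ▸ one_add_β_mul_t_ne_zero i
  refine generic_schurVar.snoc ?_ (fun i => ?_) fun i => ?_
  · exact self_ne_neg.2 (neg_ne_zero.2 (β_ne_zero r)) ∘ eq_neg_of_add_eq_zero_left
  · exact sub_ne_zero.1 (div_ne_zero_iff.1 (hne i)).1
  · exact (div_ne_zero_iff.1 (hne i)).2

/-- The factor `t_i ^ (λ_i + d_i) (1 + β t_i) ^ (i + c_i - r')` (with `1`-based `i`) that row and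
column `i` contribute to the Pfaffian entries `Λ^I`. -/
noncomputable def rowWeight (r' : ℕ) (lam : Fin r → ℕ) (I : Finset (Fin r × Fin r))
    (i : Fin r) : K r :=
  t i ^ ((lam i : ℤ) + dI I i) * (1 + β r * t i) ^ ((i : ℤ) + (cI I i : ℤ) + 1 - (r' : ℤ))

lemma rowWeight_mul_one_add (r' : ℕ) (lam : Fin r → ℕ) (I : Finset (Fin r × Fin r)) (i : Fin r) :
    rowWeight r' lam I i * (1 + β r * t i) =
      t i ^ ((lam i : ℤ) + dI I i) *
        (1 + β r * t i) ^ ((i : ℤ) + (cI I i : ℤ) + 2 - (r' : ℤ)) := by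
  rw [rowWeight, mul_assoc, ← zpow_add_one₀ (one_add_β_mul_t_ne_zero i)]
  congr 2
  ring

lemma rowWeight_succ_mul_one_add (r' : ℕ) (lam : Fin r → ℕ) (I : Finset (Fin r × Fin r))
    (i : Fin r) :
    rowWeight (r' + 1) lam I i * (1 + β r * t i) = rowWeight r' lam I i := by
  rw [rowWeight_mul_one_add, rowWeight]
  congr 2
  push_cast
  ring

lemma tN_val (i : Fin r) : tN r i = t i := dif_pos i.isLt

lemma tbarN_val (i : Fin r) : tbarN r i = tbar i := by rw [tbarN, tbar, tN_val]

lemma lamN_val (lam : Fin r → ℕ) (i : Fin r) : lamN lam i = lam i := dif_pos i.isLt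

lemma Lam_val_val (r' : ℕ) (lam : Fin r → ℕ) (I : Finset (Fin r × Fin r)) (i j : Fin r) :
    Lam r' lam I i j =
      rowWeight r' lam I i * rowWeight r' lam I j * schurKernel (schurVar i) (schurVar j) := by
  have hi := one_add_β_mul_t_ne_zero i
  rw [Lam, if_pos j.isLt, F, tN_val, tN_val, tbarN_val, tbarN_val, lamN_val, lamN_val,
    one_sub_tbar_div_tbar_div_one_sub_t_div_tbar, ← mul_inv_cancel_right₀ hi (rowWeight r' lam I i),
    rowWeight_mul_one_add, rowWeight]
  ring

lemma Lam_val_self (r' : ℕ) (lam : Fin r → ℕ) (I : Finset (Fin r × Fin r)) (i : Fin r) :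
    Lam r' lam I i r = rowWeight r' lam I i * schurKernel (schurVar i) (-β r) := by
  rw [Lam, if_neg (lt_irrefl r), Fi, tN_val, lamN_val, schurKernel_schurVar_neg_β,
    rowWeight_mul_one_add]

lemma pf_Lam_eq_prod_rowWeight (lam : Fin r → ℕ) (I : Finset (Fin r × Fin r)) :
    pf ((r + 1) / 2) (skew fun i j : Fin (2 * ((r + 1) / 2)) =>
        Lam (2 * ((r + 1) / 2)) lam I (i : ℕ) (j : ℕ)) =
      (∏ i, rowWeight r lam I i) * schurProd schurVar := by
  obtain ⟨n, rfl | rfl⟩ := Nat.even_or_odd' r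
  · rw [show (2 * n + 1) / 2 = n by lia]
    exact pf_skew_schurKernel generic_schurVar fun i j _ => Lam_val_val _ _ _ _ _
  · rw [show (2 * n + 1 + 1) / 2 = n + 1 by lia]
    refine (pf_skew_schurKernel_snoc generic_snoc_schurVar_neg_β
      (fun i j => Lam_val_val _ _ _ _ _) fun i => Lam_val_self _ _ _ _).trans ?_
    simp only [schurKernel_schurVar_neg_β]
    exact congrArg (· * _) (Finset.prod_congr rfl fun i _ => rowWeight_succ_mul_one_add _ _ _ _)

lemma rowWeight_eq (lam : Fin r → ℕ) (I : Finset (Fin r × Fin r)) (i : Fin r) :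
    rowWeight r lam I i = t i ^ lam i * (∏ _j ∈ Finset.Ioi i, (1 + β r * t i)⁻¹) *
      (t i ^ aI I i * ((t i)⁻¹ * (1 + β r * t i)) ^ cI I i) := by
  have hexp : (i : ℤ) + (cI I i : ℤ) + 1 - (r : ℤ) = (cI I i : ℤ) - (r - 1 - i : ℕ) := by
    have := i.isLt
    lia
  rw [rowWeight, hexp, dI, zpow_add₀ (t_ne_zero i), zpow_sub₀ (t_ne_zero i),
    zpow_sub₀ (one_add_β_mul_t_ne_zero i), Finset.prod_const, Fin.card_Ioi]
  simp only [zpow_natCast, mul_pow]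
  ring

lemma prod_rowWeight (lam : Fin r → ℕ) (I : Finset (Fin r × Fin r)) :
    ∏ i, rowWeight r lam I i = (∏ i, t i ^ lam i) * (∏ p ∈ Delta r, (1 + β r * t p.1)⁻¹) *
      ∏ p ∈ I, -(t p.1 / tbar p.2) := by
  simp only [rowWeight_eq, Finset.prod_mul_distrib, prod_Delta, neg_t_div_tbar, prod_pow_aI,
    prod_pow_cI (f := fun i => (t i)⁻¹ * (1 + β r * t i)), mul_assoc]

lemma pf_Lam (lam : Fin r → ℕ) (I : Finset (Fin r × Fin r)) :
    pf ((r + 1) / 2) (skew fun i j : Fin (2 * ((r + 1) / 2)) =>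
        Lam (2 * ((r + 1) / 2)) lam I (i : ℕ) (j : ℕ)) =
      (∏ i, t i ^ lam i) *
        (∏ p ∈ Delta r, (1 - tbar p.1 / tbar p.2) / (1 - t p.1 / tbar p.2)) *
          ∏ p ∈ I, -(t p.1 / tbar p.2) := by
  rw [pf_Lam_eq_prod_rowWeight, prod_rowWeight]
  simp only [one_sub_tbar_div_tbar_div_one_sub_t_div_tbar, Finset.prod_mul_distrib]
  rw [prod_Delta fun p => schurKernel (schurVar p.1) (schurVar p.2), ← schurProd]
  ring

end RationalFunctions

theorem stmt7_general {r : ℕ} (lam : Fin r → ℕ) {C : Finset (Fin r × Fin r)} (hC : C ⊆ Delta r) :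
    (∏ i : Fin r, t i ^ lam i) *
        (∏ p ∈ Delta r, (1 - tbar p.1 / tbar p.2)) /
        (∏ p ∈ C, (1 - t p.1 / tbar p.2)) =
      ∑ I ∈ (Delta r \ C).powerset,
        pf ((r + 1) / 2)
          (skew fun i j : Fin (2 * ((r + 1) / 2)) =>
            Lam (2 * ((r + 1) / 2)) lam I (i : ℕ) (j : ℕ)) := by
  have hden (A : Finset (Fin r × Fin r)) : ∏ p ∈ A, (1 - t p.1 / tbar p.2) ≠ 0 :=
    Finset.prod_ne_zero_iff.2 fun p _ => one_sub_t_div_tbar_ne_zero p.1 p.2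
  have hpowerset : ∑ I ∈ (Delta r \ C).powerset, ∏ p ∈ I, -(t p.1 / tbar p.2) =
      ∏ p ∈ Delta r \ C, (1 - t p.1 / tbar p.2) := by
    simp only [← Finset.prod_one_add, sub_eq_add_neg]
  simp only [pf_Lam, ← Finset.mul_sum, hpowerset, Finset.prod_div_distrib]
  rw [← Finset.prod_sdiff hC (f := fun p => 1 - t p.1 / tbar p.2)]
  have hD := hden (Delta r \ C)
  field_simp

/-- (Pfaffian-sum expansion for a `k`-strict partition `λ` of length `r`,
with `r' = 2 * ((r+1)/2)` the smallest even integer `≥ r`.) -/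
theorem stmt7 (k r : ℕ) (hr : 0 < r) (lam : Fin r → ℕ) (hpos : ∀ i, 0 < lam i)
    (hanti : Antitone lam)
    (hstrict : ∀ i : Fin r, ∀ h : (i : ℕ) + 1 < r, k < lam i → lam ⟨(i : ℕ) + 1, h⟩ < lam i) :
    (∏ i : Fin r, t i ^ lam i) *
        (∏ p ∈ Delta r, (1 - tbar p.1 / tbar p.2)) /
        (∏ p ∈ Cset k lam, (1 - t p.1 / tbar p.2)) =
      ∑ I ∈ (Dset k lam).powerset,
        pf ((r + 1) / 2)
          (skew fun i j : Fin (2 * ((r + 1) / 2)) =>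
            Lam (2 * ((r + 1) / 2)) lam I (i : ℕ) (j : ℕ)) := by
  rw [Dset_eq_sdiff_Cset]
  exact stmt7_general lam (Finset.filter_subset _ _)

end Stmt7
end

section
/- Let λ = (λ_1 > … > λ_r > 0) be a strict partition and let r' be the smallest even integer with r' ≥ r. Then in the field of rational functions ℚ(β, t_1, …, t_r): t_1^{λ_1} ⋯ t_r^{λ_r} · ∏_{1≤i<j≤r} (1 − t̄_i/t̄_j)/(1 − t_i/t̄_j) = Pf( Λ_{i,j} )_{1≤i<j≤r'}, where: if r is even, Λ_{i,j} := t_i^{λ_i}(1+βt_i)^{−(r−i−1)} · t_j^{λ_j}(1+βt_j)^{−(r−j)} · (1 − t̄_i/t̄_j)/(1 − t_i/t̄_j); and if r is odd (so r' = r+1), Λ_{i,j} := t_i^{λ_i}(1+βt_i)^{−(r−i)} · t_j^{λ_j}(1+βt_j)^{−(r+1−j)} · (1 − t̄_i/t̄_j)/(1 − t_i/t̄_j) for 1 ≤ i < j ≤ r, and Λ_{i,r+1} := t_i^{λ_i}(1+βt_i)^{−(r−i)} for 1 ≤ i ≤ r. -/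
open MvPolynomial

namespace Stmt8

/-- The field of rational functions `ℚ(β, t_1, …, t_r)`. -/
abbrev K (r : ℕ) := FractionRing (MvPolynomial (Option (Fin r)) ℚ)

noncomputable def β (r : ℕ) : K r :=
  algebraMap (MvPolynomial (Option (Fin r)) ℚ) (K r) (X none)

noncomputable def t {r : ℕ} (i : Fin r) : K r :=
  algebraMap (MvPolynomial (Option (Fin r)) ℚ) (K r) (X (some i))

noncomputable def tN (r : ℕ) (i : ℕ) : K r := if h : i < r then t ⟨i, h⟩ else 0

/-- `t̄ = -t/(1+βt)`. -/
noncomputable def tbar {r : ℕ} (i : Fin r) : K r := -t i / (1 + β r * t i)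

noncomputable def tbarN (r : ℕ) (i : ℕ) : K r := -tN r i / (1 + β r * tN r i)

def lamN {r : ℕ} (lam : Fin r → ℕ) (i : ℕ) : ℕ := if h : i < r then lam ⟨i, h⟩ else 0

/-- `(1 - t̄_i/t̄_j)/(1 - t_i/t̄_j)`. -/
noncomputable def ratio (r : ℕ) (i j : ℕ) : K r :=
  (1 - tbarN r i / tbarN r j) / (1 - tN r i / tbarN r j)

/-- The Pfaffian entry `Λ_{i,j}` (`0`-indexed; the formulas of the statement are
`1`-indexed, so e.g. `-(r-i-1)` there becomes `i+2-r` here). -/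
noncomputable def Lam {r : ℕ} (lam : Fin r → ℕ) (i j : ℕ) : K r :=
  if Even r then
    tN r i ^ lamN lam i * (1 + β r * tN r i) ^ ((i : ℤ) + 2 - (r : ℤ)) *
      (tN r j ^ lamN lam j * (1 + β r * tN r j) ^ ((j : ℤ) + 1 - (r : ℤ))) * ratio r i j
  else if j < r then
    tN r i ^ lamN lam i * (1 + β r * tN r i) ^ ((i : ℤ) + 1 - (r : ℤ)) *
      (tN r j ^ lamN lam j * (1 + β r * tN r j) ^ ((j : ℤ) - (r : ℤ))) * ratio r i j
  else tN r i ^ lamN lam i * (1 + β r * tN r i) ^ ((i : ℤ) + 1 - (r : ℤ))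

/-- The skew-symmetric matrix determined by its above-diagonal entries. -/
def skew {N : ℕ} {K : Type*} [Field K] (f : Fin N → Fin N → K) : Fin N → Fin N → K :=
  fun i j => if i < j then f i j else if j < i then -f j i else 0

/-- The Pfaffian of a `2n × 2n` skew-symmetric matrix, via
`Pf(A) = (2^n n!)⁻¹ Σ_{σ ∈ S_{2n}} sgn(σ) ∏_{i=1}^{n} A_{σ(2i-1), σ(2i)}`. -/
noncomputable def pf {K : Type*} [Field K] (n : ℕ) (A : Fin (2 * n) → Fin (2 * n) → K) :
    K :=
  (((2 ^ n * n.factorial : ℕ) : K))⁻¹ *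
    ∑ σ : Equiv.Perm (Fin (2 * n)),
      ((Equiv.Perm.sign σ : ℤ) : K) *
        ∏ i : Fin n,
          A (σ ⟨2 * (i : ℕ), by have := i.isLt; omega⟩)
            (σ ⟨2 * (i : ℕ) + 1, by have := i.isLt; omega⟩)

/-! The ratios depend only on `u_i = 1 + βt_i`, which turns the formal group law
`a ⊕ b = a + b + βab` into multiplication: one has
`(1 - t̄_i/t̄_j)/(1 - t_i/t̄_j) = κ(u_i, u_j)/u_i` with
`κ(u, v) = (v - u)/(uv - 1)`. The Cayley transform `u ↦ (u - 1)/(u + 1)` turns `κ` into Schur's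
kernel `(y - x)/(y + x)`, so the theorem is Schur's Pfaffian identity
`Pf ((x_j - x_i)/(x_j + x_i)) = ∏_{i<j} (x_j - x_i)/(x_j + x_i)` with rows and columns rescaled.
When `r` is odd the additional variable is `u_{r+1} = 0`, since `κ(u, 0) = u`.

Schur's identity is proved by induction on the number of variables. Dividing the Laplace expansion
of the Pfaffian by the product side reduces it to a sum of rational functions, which is Lagrange
interpolation at `0` for `∏ (X + v_c) - ∏ (X - v_c)`, where `v` is `x` with one sign changed. -/

open Finset

section Permutations

theorem sum_sum_erase_perm_apply {ι M : Type*} [Fintype ι] [DecidableEq ι] [AddCommMonoid M]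
    (g : ι → ι → M) {a b : ι} (hab : a ≠ b) :
    ∑ σ : Equiv.Perm ι, ∑ j ∈ univ.erase (σ a), g (σ a) j =
      (Fintype.card ι - 1) • ∑ σ : Equiv.Perm ι, g (σ a) (σ b) := by
  have move (k : ι) (hk : k ∈ univ.erase a) :
      ∑ σ : Equiv.Perm ι, g (σ a) (σ k) = ∑ σ : Equiv.Perm ι, g (σ a) (σ b) :=
    Fintype.sum_equiv (Equiv.mulRight (Equiv.swap b k)) _ _ fun σ => by
      simp [Equiv.swap_apply_of_ne_of_ne hab (ne_of_mem_erase hk).symm]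
  calc ∑ σ : Equiv.Perm ι, ∑ j ∈ univ.erase (σ a), g (σ a) j
      = ∑ σ : Equiv.Perm ι, ∑ k ∈ univ.erase a, g (σ a) (σ k) :=
        sum_congr rfl fun σ _ => (sum_equiv σ (by simp) fun _ _ => rfl).symm
    _ = (Fintype.card ι - 1) • ∑ σ : Equiv.Perm ι, g (σ a) (σ b) := by
        rw [sum_comm, sum_congr rfl move, sum_const, card_erase_of_mem (mem_univ a), card_univ]

/-- The permutation of `Fin (m + 2)` fixing `0` and `1` and acting as `e` on the other elements;
it embeds the permutations occurring in a Pfaffian minor. -/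
def permSuccSucc {m : ℕ} (e : Equiv.Perm (Fin m)) : Equiv.Perm (Fin (m + 2)) :=
  Equiv.Perm.decomposeFin.symm (0, Equiv.Perm.decomposeFin.symm (0, e))

variable {m : ℕ} (e : Equiv.Perm (Fin m))

theorem permSuccSucc_zero : permSuccSucc e 0 = 0 := by
  simp [permSuccSucc]

theorem permSuccSucc_one : permSuccSucc e 1 = 1 := by
  simp [permSuccSucc]

theorem permSuccSucc_succ_succ (i : Fin m) : permSuccSucc e i.succ.succ = (e i).succ.succ := by
  simp [permSuccSucc]

theorem sign_permSuccSucc : Equiv.Perm.sign (permSuccSucc e) = Equiv.Perm.sign e := by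
  simp [permSuccSucc]

theorem intCast_sign_mul_self {R ι : Type*} [Ring R] [Fintype ι] [DecidableEq ι]
    (σ : Equiv.Perm ι) :
    ((Equiv.Perm.sign σ : ℤ) : R) * ((Equiv.Perm.sign σ : ℤ) : R) = 1 := by
  rw [← Int.cast_mul, Int.units_coe_mul_self, Int.cast_one]

theorem eq_zero_of_comp_perm_eq_sign_mul {R ι X : Type*} [Ring R] [NoZeroDivisors R] [CharZero R]
    [Fintype ι] [DecidableEq ι] {f : (ι → X) → R} {x : ι → X}
    (hf : ∀ σ : Equiv.Perm ι, f (x ∘ σ) = ((Equiv.Perm.sign σ : ℤ) : R) * f x)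
    (hx : ¬ Function.Injective x) : f x = 0 := by
  obtain ⟨i, j, hij, hne⟩ := Function.not_injective_iff.mp hx
  have hswap : x ∘ Equiv.swap i j = x := by
    rw [Equiv.comp_swap_eq_update, hij, Function.update_eq_self, ← hij, Function.update_eq_self]
  have h := hf (Equiv.swap i j)
  rw [hswap, Equiv.Perm.sign_swap hne] at h
  simpa [self_eq_neg] using h

end Permutations

section UpperProd

/-- The product of the entries of a square array strictly above the diagonal. It is the product
side of the Pfaffian identities below. -/
def upperProd {M : Type*} [CommMonoid M] {N : ℕ} (A : Fin N → Fin N → M) : M :=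
  ∏ i, ∏ j ∈ Ioi i, A i j

/-- The product of the entries outside columns `a` and `b` of rows `a` and `b`. For a
skew-symmetric array it is the factor by which the product above the diagonal changes, up to sign
and the entry `A a b`, when the indices `a` and `b` are removed. -/
def pairProd {M ι : Type*} [CommMonoid M] [Fintype ι] [DecidableEq ι] (A : ι → ι → M) (a b : ι) :
    M :=
  ∏ c ∈ (univ.erase a).erase b, A a c * A b c

theorem pairProd_comp_perm {M ι : Type*} [CommMonoid M] [Fintype ι] [DecidableEq ι]
    (A : ι → ι → M) (σ : Equiv.Perm ι) (a b : ι) :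
    pairProd (fun i j => A (σ i) (σ j)) a b = pairProd A (σ a) (σ b) :=
  prod_equiv σ (by simp) fun _ _ => rfl

variable {M : Type*} [CommMonoid M]

theorem upperProd_mul {N : ℕ} (A B : Fin N → Fin N → M) :
    upperProd (fun i j => A i j * B i j) = upperProd A * upperProd B := by
  simp only [upperProd, prod_mul_distrib]

theorem upperProd_succ {N : ℕ} (A : Fin (N + 1) → Fin (N + 1) → M) :
    upperProd A = (∏ j : Fin N, A 0 j.succ) * upperProd fun i j => A i.succ j.succ := by
  simp only [upperProd, Fin.prod_univ_succ, Fin.prod_Ioi_zero, Fin.prod_Ioi_succ]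

theorem upperProd_castSucc {N : ℕ} (A : Fin (N + 1) → Fin (N + 1) → M) :
    upperProd A =
      (upperProd fun i j => A i.castSucc j.castSucc) * ∏ i : Fin N, A i.castSucc (Fin.last N) := by
  have columns {n : ℕ} (B : Fin n → Fin n → M) : upperProd B = ∏ j, ∏ i ∈ Iio j, B i j :=
    prod_comm' (by simp)
  simp only [columns, Fin.prod_univ_castSucc, Fin.prod_Iio_castSucc, Fin.Iio_last_eq_map, prod_map,
    Fin.coe_castSuccEmb]

theorem pairProd_zero_one {m : ℕ} (A : Fin (m + 2) → Fin (m + 2) → M) :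
    pairProd A 0 1 = ∏ c : Fin m, A 0 c.succ.succ * A 1 c.succ.succ := by
  refine (prod_nbij (fun c : Fin m => c.succ.succ) (by simp [Fin.ext_iff]) (by simp [Set.InjOn]) ?_
    fun _ _ => rfl).symm
  intro i hi
  induction i using Fin.cases with
  | zero => simp at hi
  | succ i => induction i using Fin.cases with
    | zero => simp at hi
    | succ i => exact ⟨i, by simp⟩

theorem upperProd_succ_succ {m : ℕ} (A : Fin (m + 2) → Fin (m + 2) → M) :
    upperProd A =
      A 0 1 * pairProd A 0 1 * upperProd fun i j => A i.succ.succ j.succ.succ := by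
  rw [upperProd_succ, upperProd_succ, pairProd_zero_one, prod_mul_distrib, Fin.prod_univ_succ]
  simp only [Fin.succ_zero_eq_one, mul_assoc]

theorem upperProd_comp_perm {R : Type*} [CommRing R] {N : ℕ} {A : Fin N → Fin N → R}
    (hA : ∀ i j, A i j = -A j i) (σ : Equiv.Perm (Fin N)) :
    (upperProd fun i j => A (σ i) (σ j)) = ((Equiv.Perm.sign σ : ℤ) : R) * upperProd A :=
  σ.prod_Ioi_comp_eq_sign_mul_prod hA

end UpperProd

section Pfaffian

variable {F : Type*} [Field F]

theorem skew_eq_of_lt [CharZero F] {N : ℕ} {f A : Fin N → Fin N → F} (hA : ∀ i j, A i j = -A j i)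
    (hf : ∀ i j, i < j → f i j = A i j) : skew f = A := by
  ext i j
  rcases lt_trichotomy i j with hij | rfl | hji
  · simp [skew, hij, hf i j hij]
  · simp [skew, self_eq_neg.mp (hA i i)]
  · simp [skew, hji, hji.not_gt, hf j i hji, hA i j]

theorem prod_even_mul_prod_odd {M : Type*} [CommMonoid M] {n : ℕ} (g : Fin (2 * n) → M) :
    (∏ i : Fin n, g ⟨2 * i, by omega⟩) * ∏ i : Fin n, g ⟨2 * i + 1, by omega⟩ = ∏ i, g i := by
  rw [← prod_mul_distrib]
  induction n with
  | zero => rfl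
  | succ n ih =>
    change _ = ∏ i : Fin (2 * n + 2), g i
    rw [Fin.prod_univ_succ, Fin.prod_univ_succ, Fin.prod_univ_succ, ← mul_assoc, ← ih]
    rfl

theorem pf_mul_mul {n : ℕ} (c : Fin (2 * n) → F) (A : Fin (2 * n) → Fin (2 * n) → F) :
    (pf n fun i j => c i * c j * A i j) = (∏ i, c i) * pf n A := by
  have rescale (σ : Equiv.Perm (Fin (2 * n))) :
      (∏ i : Fin n, c (σ ⟨2 * i, by omega⟩)) * ∏ i : Fin n, c (σ ⟨2 * i + 1, by omega⟩) =
        ∏ i, c i :=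
    (prod_even_mul_prod_odd fun i => c (σ i)).trans (Equiv.prod_comp σ c)
  simp only [pf, prod_mul_distrib, rescale, mul_left_comm _ (∏ i, c i), ← mul_sum]

theorem pf_comp_perm {n : ℕ} (A : Fin (2 * n) → Fin (2 * n) → F)
    (σ : Equiv.Perm (Fin (2 * n))) :
    (pf n fun i j => A (σ i) (σ j)) = ((Equiv.Perm.sign σ : ℤ) : F) * pf n A := by
  have reindex : ∑ τ : Equiv.Perm (Fin (2 * n)), ((Equiv.Perm.sign τ : ℤ) : F) *
        ∏ i : Fin n, A (σ (τ ⟨2 * i, by omega⟩)) (σ (τ ⟨2 * i + 1, by omega⟩)) =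
      ∑ τ : Equiv.Perm (Fin (2 * n)), ((Equiv.Perm.sign σ : ℤ) : F) *
        (((Equiv.Perm.sign τ : ℤ) : F) *
          ∏ i : Fin n, A (τ ⟨2 * i, by omega⟩) (τ ⟨2 * i + 1, by omega⟩)) :=
    Fintype.sum_equiv (Equiv.mulLeft σ) _ _ fun τ => by
      simp only [Equiv.coe_mulLeft, map_mul, Units.val_mul, Int.cast_mul, Equiv.Perm.mul_apply,
        ← mul_assoc, intCast_sign_mul_self, one_mul]
  rw [pf, pf, reindex, ← mul_sum, mul_left_comm]

/-- The Laplace expansion of the Pfaffian along one row, averaged over the choice of the row. -/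
theorem pf_succ [CharZero F] (n : ℕ) (A : Fin (2 * n + 2) → Fin (2 * n + 2) → F) :
    pf (n + 1) A = ((2 * (n + 1) * (2 * n).factorial : ℕ) : F)⁻¹ *
      ∑ σ : Equiv.Perm (Fin (2 * n + 2)), ((Equiv.Perm.sign σ : ℤ) : F) *
        (A (σ 0) (σ 1) * pf n fun i j => A (σ i.succ.succ) (σ j.succ.succ)) := by
  set S : F := ∑ σ : Equiv.Perm (Fin (2 * n + 2)), ((Equiv.Perm.sign σ : ℤ) : F) *
    ∏ i : Fin (n + 1), A (σ ⟨2 * i, by omega⟩) (σ ⟨2 * i + 1, by omega⟩)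
  have split (σ : Equiv.Perm (Fin (2 * n + 2))) :
      ∏ i : Fin (n + 1), A (σ ⟨2 * i, by omega⟩) (σ ⟨2 * i + 1, by omega⟩) =
        A (σ 0) (σ 1) * ∏ i : Fin n, A (σ (Fin.succ (Fin.succ ⟨2 * i, by omega⟩)))
          (σ (Fin.succ (Fin.succ ⟨2 * i + 1, by omega⟩))) :=
    Fin.prod_univ_succ _
  have shift (e : Equiv.Perm (Fin (2 * n))) :
      ∑ σ : Equiv.Perm (Fin (2 * n + 2)), ((Equiv.Perm.sign σ : ℤ) : F) *
        (A (σ 0) (σ 1) * (((Equiv.Perm.sign e : ℤ) : F) *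
          ∏ i : Fin n, A (σ (e ⟨2 * i, by omega⟩).succ.succ)
            (σ (e ⟨2 * i + 1, by omega⟩).succ.succ))) = S :=
    Fintype.sum_equiv (Equiv.mulRight (permSuccSucc e)) _ _ fun σ => by
      rw [Equiv.coe_mulRight, split]
      simp only [Equiv.Perm.mul_apply, permSuccSucc_zero, permSuccSucc_one,
        permSuccSucc_succ_succ, map_mul, sign_permSuccSucc, Units.val_mul, Int.cast_mul]
      ring
  have expand : ∑ σ : Equiv.Perm (Fin (2 * n + 2)), ((Equiv.Perm.sign σ : ℤ) : F) *
        (A (σ 0) (σ 1) * pf n fun i j => A (σ i.succ.succ) (σ j.succ.succ)) =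
      ((2 ^ n * n.factorial : ℕ) : F)⁻¹ * (((2 * n).factorial : F) * S) := by
    simp only [pf, mul_left_comm _ (((2 ^ n * n.factorial : ℕ) : F)⁻¹), ← mul_sum]
    congr 1
    simp only [mul_sum]
    rw [sum_comm, sum_congr rfl fun e _ => shift e, sum_const, card_univ, Fintype.card_perm,
      Fintype.card_fin, nsmul_eq_mul]
  have hfact : ((2 * n).factorial : F) ≠ 0 := Nat.cast_ne_zero.mpr (Nat.factorial_ne_zero _)
  change ((2 ^ (n + 1) * (n + 1).factorial : ℕ) : F)⁻¹ * S = _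
  rw [expand, Nat.factorial_succ, pow_succ]
  push_cast
  field_simp

end Pfaffian

section SchurKernel

variable {F ι : Type*} [Field F]

theorem injective_update {α β : Type*} [DecidableEq α] {f : α → β} (hf : Function.Injective f)
    {a : α} {b : β} (hb : ∀ i, f i ≠ b) : Function.Injective (Function.update f a b) := by
  intro i j hij
  obtain hi | hi := eq_or_ne i a <;> obtain hj | hj := eq_or_ne j a
  · exact hi.trans hj.symm
  · rw [hi, Function.update_self, Function.update_of_ne hj] at hij
    exact absurd hij.symm (hb j)
  · rw [hj, Function.update_self, Function.update_of_ne hi] at hij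
    exact absurd hij (hb i)
  · exact hf (by simpa only [Function.update_of_ne hi, Function.update_of_ne hj] using hij)

theorem sum_prod_add_div_sub_eq_zero [NeZero (2 : F)] [DecidableEq ι] {s : Finset ι} {v : ι → F}
    (hv : Set.InjOn v s) (hv0 : ∀ i ∈ s, v i ≠ 0) (hs : Even #s) :
    ∑ b ∈ s, ∏ c ∈ s.erase b, (v c + v b) / (v c - v b) = 0 := by
  set P : Polynomial F := Lagrange.nodal s (-v) - Lagrange.nodal s v with hP
  have hdeg : P.degree < #s := by
    rw [← Lagrange.degree_nodal (s := s) (v := -v)]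
    exact Polynomial.degree_sub_lt_left (by simp only [Lagrange.degree_nodal])
      Lagrange.nodal_ne_zero (by rw [Lagrange.nodal_monic, Lagrange.nodal_monic])
  have hzero : P.eval 0 = 0 := by
    simp [hP, Lagrange.eval_nodal, prod_neg, hs.neg_one_pow]
  have hnode (b : ι) (hb : b ∈ s) : P.eval (v b) = 2 * v b * ∏ c ∈ s.erase b, (v c + v b) := by
    rw [hP, Polynomial.eval_sub, Lagrange.eval_nodal_at_node hb, Lagrange.eval_nodal, sub_zero,
      ← mul_prod_erase s _ hb]
    simp only [Pi.neg_apply, sub_neg_eq_add, two_mul, add_comm (v b)]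
  have hterm (b : ι) (hb : b ∈ s) :
      Lagrange.nodalWeight s v b * (0 - v b)⁻¹ * P.eval (v b) =
        2 * ∏ c ∈ s.erase b, (v c + v b) / (v c - v b) := by
    have hodd : Odd #(s.erase b) := by
      rw [card_erase_of_mem hb]
      exact Nat.Even.sub_odd (card_pos.mpr ⟨b, hb⟩) hs odd_one
    have hsign : Lagrange.nodalWeight s v b = -∏ c ∈ s.erase b, (v c - v b)⁻¹ := by
      rw [← neg_one_mul, ← hodd.neg_one_pow, ← prod_neg, Lagrange.nodalWeight]
      exact prod_congr rfl fun c _ => by rw [← inv_neg, neg_sub]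
    rw [hsign, hnode b hb, zero_sub, inv_neg]
    simp only [div_eq_mul_inv, prod_mul_distrib]
    linear_combination (2 * (∏ c ∈ s.erase b, (v c - v b)⁻¹) * ∏ c ∈ s.erase b, (v c + v b)) *
      inv_mul_cancel₀ (hv0 b hb)
  have h := Lagrange.eval_interpolate_not_at_node (fun i => P.eval (v i))
    fun i hi => (hv0 i hi).symm
  rw [← Lagrange.eq_interpolate hv hdeg, hzero, sum_congr rfl hterm, ← mul_sum, eq_comm,
    mul_eq_zero, mul_eq_zero] at h
  exact (h.resolve_left (Lagrange.eval_nodal_not_at_node fun i hi => (hv0 i hi).symm)).resolve_left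
    two_ne_zero

/-- Schur's kernel `(y - x)/(y + x)`, whose Pfaffian factors. -/
def schurKernel (x y : F) : F := (y - x) / (y + x)

theorem schurKernel_antisymm (x y : F) : schurKernel x y = -schurKernel y x := by
  rw [schurKernel, schurKernel, add_comm x y, ← neg_sub, neg_div]

theorem schurKernel_ne_zero {x y : F} (hxy : x ≠ y) (hadd : x + y ≠ 0) : schurKernel x y ≠ 0 :=
  div_ne_zero (sub_ne_zero.mpr hxy.symm) (by rwa [add_comm])

variable [Fintype ι] [DecidableEq ι] {x : ι → F}

theorem sum_schurKernel_mul_prod_inv [NeZero (2 : F)] (hι : Even (Fintype.card ι))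
    (hx : Function.Injective x) (hadd : ∀ i j, x i + x j ≠ 0) (a : ι) :
    ∑ b ∈ univ.erase a, schurKernel (x a) (x b) *
        ∏ c ∈ (univ.erase a).erase b, (schurKernel (x b) (x c))⁻¹ =
      ∏ c ∈ univ.erase a, schurKernel (x a) (x c) := by
  have hx0 (i : ι) : x i ≠ 0 := fun h => hadd i i (by rw [h, add_zero])
  set v : ι → F := Function.update x a (-x a)
  have hva : v a = -x a := Function.update_self ..
  have hvx {i : ι} (hi : i ≠ a) : v i = x i := Function.update_of_ne hi ..
  have hinj : Function.Injective v :=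
    injective_update hx fun i h => hadd i a (by rw [h, neg_add_cancel])
  have hv0 (i : ι) : v i ≠ 0 := by
    rcases eq_or_ne i a with rfl | hi
    · rw [hva]; exact neg_ne_zero.mpr (hx0 i)
    · rw [hvx hi]; exact hx0 i
  have row_a : ∏ c ∈ univ.erase a, (v c + v a) / (v c - v a) =
      ∏ c ∈ univ.erase a, schurKernel (x a) (x c) :=
    prod_congr rfl fun c hc => by
      rw [hva, hvx (ne_of_mem_erase hc), ← sub_eq_add_neg, sub_neg_eq_add, schurKernel]
  have row (b : ι) (hb : b ∈ univ.erase a) :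
      ∏ c ∈ univ.erase b, (v c + v b) / (v c - v b) =
        -(schurKernel (x a) (x b) *
          ∏ c ∈ (univ.erase a).erase b, (schurKernel (x b) (x c))⁻¹) := by
    have hba : b ≠ a := ne_of_mem_erase hb
    rw [← mul_prod_erase _ _ (mem_erase.mpr ⟨hba.symm, mem_univ a⟩), erase_right_comm, ← neg_mul]
    congr 1
    · rw [hva, hvx hba, schurKernel, ← div_neg]
      congr 1 <;> ring
    · refine prod_congr rfl fun c hc => ?_
      rw [hvx hba, hvx (ne_of_mem_erase (mem_of_mem_erase hc)), schurKernel, inv_div]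
  have h := sum_prod_add_div_sub_eq_zero hinj.injOn (fun i _ => hv0 i) (s := univ) hι
  rw [← add_sum_erase _ _ (mem_univ a), row_a, sum_congr rfl row, sum_neg_distrib] at h
  exact (add_neg_eq_zero.mp h).symm

theorem sum_inv_pairProd_schurKernel [NeZero (2 : F)] (hι : Even (Fintype.card ι))
    (hx : Function.Injective x) (hadd : ∀ i j, x i + x j ≠ 0) (a : ι) :
    ∑ b ∈ univ.erase a, (pairProd (fun i j => schurKernel (x i) (x j)) a b)⁻¹ = 1 := by
  have hne {i j : ι} (hij : i ≠ j) : schurKernel (x i) (x j) ≠ 0 :=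
    schurKernel_ne_zero (hx.ne hij) (hadd i j)
  have hrow : ∏ c ∈ univ.erase a, schurKernel (x a) (x c) ≠ 0 :=
    prod_ne_zero_iff.mpr fun c hc => hne (ne_of_mem_erase hc).symm
  apply mul_left_cancel₀ hrow
  rw [mul_one, mul_sum]
  refine Eq.trans ?_ (sum_schurKernel_mul_prod_inv hι hx hadd a)
  refine sum_congr rfl fun b hb => ?_
  rw [← mul_prod_erase _ _ hb, pairProd, ← prod_inv_distrib, mul_assoc, ← prod_mul_distrib]
  congr 1
  refine prod_congr rfl fun c hc => ?_
  rw [mul_inv, mul_inv_cancel_left₀ (hne (ne_of_mem_erase (mem_of_mem_erase hc)).symm)]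

end SchurKernel

section SchurPfaffian

variable {F : Type*} [Field F] [CharZero F]

theorem sum_perm_inv_pairProd_schurKernel {m : ℕ} (hm : Even m) {x : Fin (m + 2) → F}
    (hx : Function.Injective x) (hadd : ∀ i j, x i + x j ≠ 0) :
    ∑ σ : Equiv.Perm (Fin (m + 2)),
        (pairProd (fun i j => schurKernel (x i) (x j)) (σ 0) (σ 1))⁻¹ =
      ((m + 2) * m.factorial : ℕ) := by
  have hcard : Even (Fintype.card (Fin (m + 2))) := by simpa using hm.add even_two
  have h := sum_sum_erase_perm_apply
    (fun a b => (pairProd (fun i j => schurKernel (x i) (x j)) a b)⁻¹)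
    (zero_ne_one : (0 : Fin (m + 2)) ≠ 1)
  rw [sum_congr rfl fun σ _ => sum_inv_pairProd_schurKernel hcard hx hadd (σ 0)] at h
  simp only [sum_const, card_univ, Fintype.card_perm, Fintype.card_fin, nsmul_eq_mul, mul_one] at h
  apply mul_left_cancel₀ (Nat.cast_ne_zero.mpr m.succ_ne_zero : ((m + 1 : ℕ) : F) ≠ 0)
  refine h.symm.trans ?_
  rw [Nat.factorial_succ, Nat.factorial_succ]
  push_cast
  ring

theorem pf_schurKernel_of_injective {n : ℕ} {x : Fin (2 * n) → F} (hx : Function.Injective x)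
    (hadd : ∀ i j, x i + x j ≠ 0) :
    (pf n fun i j => schurKernel (x i) (x j)) = upperProd fun i j => schurKernel (x i) (x j) := by
  induction n with
  | zero => simp [pf, upperProd]
  | succ n ih =>
    change Fin (2 * n + 2) → F at x
    set A : Fin (2 * n + 2) → Fin (2 * n + 2) → F := fun i j => schurKernel (x i) (x j)
    have hne {i j : Fin (2 * n + 2)} (hij : i ≠ j) : A i j ≠ 0 :=
      schurKernel_ne_zero (hx.ne hij) (hadd i j)
    have hminor (σ : Equiv.Perm (Fin (2 * n + 2))) :
        ((Equiv.Perm.sign σ : ℤ) : F) *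
          (A (σ 0) (σ 1) * pf n fun i j => A (σ i.succ.succ) (σ j.succ.succ)) =
            upperProd A * (pairProd A (σ 0) (σ 1))⁻¹ := by
      have hpair : pairProd A (σ 0) (σ 1) ≠ 0 :=
        prod_ne_zero_iff.mpr fun c hc => mul_ne_zero
          (hne (ne_of_mem_erase (mem_of_mem_erase hc)).symm) (hne (ne_of_mem_erase hc).symm)
      have hperm := upperProd_comp_perm (fun i j => schurKernel_antisymm (x i) (x j)) σ
      rw [upperProd_succ_succ, pairProd_comp_perm A] at hperm
      rw [ih (x := fun i => x (σ i.succ.succ)) (fun i j hij => by simpa using σ.injective (hx hij))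
        fun i j => hadd _ _, eq_mul_inv_iff_mul_eq₀ hpair]
      linear_combination ((Equiv.Perm.sign σ : ℤ) : F) * hperm +
        upperProd A * intCast_sign_mul_self (R := F) σ
    have hfact : ((2 * (n + 1) * (2 * n).factorial : ℕ) : F) ≠ 0 :=
      Nat.cast_ne_zero.mpr (by positivity)
    have hsum : ∑ σ : Equiv.Perm (Fin (2 * n + 2)), (pairProd A (σ 0) (σ 1))⁻¹ =
        ((2 * (n + 1) * (2 * n).factorial : ℕ) : F) :=
      sum_perm_inv_pairProd_schurKernel (even_two_mul n) hx hadd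
    rw [pf_succ, sum_congr rfl fun σ _ => hminor σ, ← mul_sum, hsum, mul_left_comm,
      inv_mul_cancel₀ hfact, mul_one]
    rfl

theorem pf_schurKernel {n : ℕ} {x : Fin (2 * n) → F} (hadd : ∀ i j, x i + x j ≠ 0) :
    (pf n fun i j => schurKernel (x i) (x j)) = upperProd fun i j => schurKernel (x i) (x j) := by
  by_cases hx : Function.Injective x
  · exact pf_schurKernel_of_injective hx hadd
  · have hpf := eq_zero_of_comp_perm_eq_sign_mul
      (f := fun y : Fin (2 * n) → F => pf n fun i j => schurKernel (y i) (y j))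
      (pf_comp_perm fun i j => schurKernel (x i) (x j)) hx
    have hprod := eq_zero_of_comp_perm_eq_sign_mul
      (f := fun y : Fin (2 * n) → F => upperProd fun i j => schurKernel (y i) (y j))
      (upperProd_comp_perm fun i j => schurKernel_antisymm (x i) (x j)) hx
    exact hpf.trans hprod.symm

end SchurPfaffian

section MulKernel

variable {F : Type*} [Field F]

/-- The kernel `(v - u)/(uv - 1)`: Schur's kernel in a coordinate that is multiplicative for the
formal group law. -/
def mulKernel (u v : F) : F := (v - u) / (u * v - 1)

theorem mulKernel_antisymm (u v : F) : mulKernel u v = -mulKernel v u := by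
  rw [mulKernel, mulKernel, mul_comm v u, ← neg_sub, neg_div]

theorem mulKernel_zero_right (u : F) : mulKernel u 0 = u := by
  simp [mulKernel]

theorem schurKernel_cayley [NeZero (2 : F)] {u v : F} (hu : u + 1 ≠ 0)
    (hv : v + 1 ≠ 0) :
    schurKernel ((u - 1) / (u + 1)) ((v - 1) / (v + 1)) = mulKernel u v := by
  have hsub : (v - 1) / (v + 1) - (u - 1) / (u + 1) =
      2 / ((u + 1) * (v + 1)) * (v - u) := by
    field_simp
    ring
  have hadd : (v - 1) / (v + 1) + (u - 1) / (u + 1) =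
      2 / ((u + 1) * (v + 1)) * (u * v - 1) := by
    field_simp
    ring
  rw [schurKernel, hsub, hadd, mulKernel, mul_div_mul_left _ _
    (div_ne_zero two_ne_zero (mul_ne_zero hu hv))]

theorem one_sub_bar_div_div_eq_mulKernel_div {β a b : F} (hβ : β ≠ 0) (hb : b ≠ 0)
    (ha1 : 1 + β * a ≠ 0) :
    (1 - -a / (1 + β * a) / (-b / (1 + β * b))) / (1 - a / (-b / (1 + β * b))) =
      mulKernel (1 + β * a) (1 + β * b) / (1 + β * a) := by
  have hnum : 1 - -a / (1 + β * a) / (-b / (1 + β * b)) = b⁻¹ * ((b - a) / (1 + β * a)) := by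
    rw [neg_div (1 + β * a), neg_div (1 + β * b), neg_div_neg_eq, div_div_div_eq,
      one_sub_div (mul_ne_zero ha1 hb), inv_mul_eq_div, div_div]
    congr 1
    ring
  have hden : 1 - a / (-b / (1 + β * b)) = b⁻¹ * (a + b + β * a * b) := by
    field_simp
    ring
  have hker : mulKernel (1 + β * a) (1 + β * b) = (b - a) / (a + b + β * a * b) := by
    rw [mulKernel, ← mul_div_mul_left (b - a) (a + b + β * a * b) hβ]
    congr 1 <;> ring
  rw [hnum, hden, hker, mul_div_mul_left _ _ (inv_ne_zero hb), div_right_comm]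

theorem pf_mulKernel [CharZero F] {n : ℕ} {u : Fin (2 * n) → F} (hu : ∀ i j, u i * u j ≠ 1) :
    (pf n fun i j => mulKernel (u i) (u j)) = upperProd fun i j => mulKernel (u i) (u j) := by
  have hu1 (i : Fin (2 * n)) : u i + 1 ≠ 0 := fun h =>
    hu i i (by rw [eq_neg_of_add_eq_zero_left h]; ring)
  have hadd (i j : Fin (2 * n)) :
      (u i - 1) / (u i + 1) + (u j - 1) / (u j + 1) ≠ 0 := by
    rw [div_add_div _ _ (hu1 i) (hu1 j)]
    refine div_ne_zero (fun h => hu i j ?_) (mul_ne_zero (hu1 i) (hu1 j))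
    linear_combination h / 2
  simpa only [schurKernel_cayley (hu1 _) (hu1 _)] using pf_schurKernel hadd

end MulKernel

section RationalFunctions

theorem algebraMap_ne_zero_of_eval_ne_zero {ι R : Type*} [CommRing R] (x : ι → R)
    {p : MvPolynomial ι R} (hp : eval x p ≠ 0) :
    algebraMap (MvPolynomial ι R) (FractionRing (MvPolynomial ι R)) p ≠ 0 := by
  rw [Ne, FaithfulSMul.algebraMap_eq_zero_iff]
  rintro rfl
  exact hp (map_zero _)

theorem β_ne_zero (r : ℕ) : β r ≠ 0 :=
  algebraMap_ne_zero_of_eval_ne_zero 1 (by simp)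

variable {r : ℕ}

theorem t_ne_zero (i : Fin r) : t i ≠ 0 :=
  algebraMap_ne_zero_of_eval_ne_zero 1 (by simp)

/-- The coordinate `1 + βt_i`, multiplicative for the formal group law `a ⊕ b = a + b + βab`. -/
noncomputable def mulCoord (i : Fin r) : K r := 1 + β r * t i

theorem mulCoord_ne_zero (i : Fin r) : mulCoord i ≠ 0 := by
  have h := algebraMap_ne_zero_of_eval_ne_zero (1 : Option (Fin r) → ℚ)
    (p := 1 + X none * X (some i)) (by simp)
  simpa only [mulCoord, β, t, map_add, map_mul, map_one] using h

theorem mulCoord_mul_mulCoord_ne_one (i j : Fin r) : mulCoord i * mulCoord j ≠ 1 := by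
  have h := algebraMap_ne_zero_of_eval_ne_zero (1 : Option (Fin r) → ℚ)
    (p := (1 + X none * X (some i)) * (1 + X none * X (some j)) - 1) (by norm_num)
  rw [← sub_ne_zero]
  simpa only [mulCoord, β, t, map_sub, map_add, map_mul, map_one] using h

theorem tN_val (i : Fin r) : tN r i = t i := by
  simp [tN]

theorem lamN_val (lam : Fin r → ℕ) (i : Fin r) : lamN lam i = lam i := by
  simp [lamN]

theorem ratio_val (i j : Fin r) :
    ratio r i j = mulKernel (mulCoord i) (mulCoord j) / mulCoord i := by
  rw [ratio, tbarN, tbarN, tN_val, tN_val]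
  exact one_sub_bar_div_div_eq_mulKernel_div (β_ne_zero r) (t_ne_zero j) (mulCoord_ne_zero i)

/-- The factor `t_i^{λ_i} (1 + βt_i)^{-(r-i)}` of the Pfaffian entries (with `i` counted from `1`;
the exponent is `i + 1 - r` when `i` is counted from `0`). -/
noncomputable def weight (lam : Fin r → ℕ) (i : Fin r) : K r :=
  t i ^ lam i * mulCoord i ^ ((i : ℤ) + 1 - r)

theorem prod_pow_mul_prod_ratio (lam : Fin r → ℕ) :
    (∏ i : Fin r, t i ^ lam i) *
        ∏ p ∈ univ.filter (fun p : Fin r × Fin r => p.1 < p.2), ratio r (p.1 : ℕ) (p.2 : ℕ) =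
      (∏ i, weight lam i) * upperProd fun i j => mulKernel (mulCoord i) (mulCoord j) := by
  have hpairs : ∏ p ∈ univ.filter (fun p : Fin r × Fin r => p.1 < p.2), ratio r p.1 p.2 =
      upperProd fun i j : Fin r => ratio r i j :=
    prod_finset_product _ univ Ioi (by simp)
  have hinv : (upperProd fun i _ : Fin r => (mulCoord i)⁻¹) =
      ∏ i : Fin r, mulCoord i ^ ((i : ℤ) + 1 - r) := by
    refine prod_congr rfl fun i _ => ?_
    rw [prod_const, Fin.card_Ioi, inv_pow, ← zpow_natCast, ← zpow_neg]
    congr 1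
    omega
  rw [hpairs]
  simp only [ratio_val, div_eq_mul_inv, upperProd_mul, weight, prod_mul_distrib, hinv]
  ring

theorem Lam_of_even (hr : Even r) (lam : Fin r → ℕ) (i j : Fin r) :
    Lam lam i j = weight lam i * weight lam j * mulKernel (mulCoord i) (mulCoord j) := by
  have hi := mulCoord_ne_zero i
  rw [Lam, if_pos hr, ratio_val, tN_val, tN_val, lamN_val, lamN_val, ← mulCoord, ← mulCoord, weight,
    weight, show (i : ℤ) + 2 - r = i + 1 - r + 1 by ring, zpow_add_one₀ hi]
  field_simp

theorem Lam_of_odd (hr : Odd r) (lam : Fin r → ℕ) (i j : Fin r) :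
    Lam lam i j = weight lam i / mulCoord i * (weight lam j / mulCoord j) *
      mulKernel (mulCoord i) (mulCoord j) := by
  have hj := mulCoord_ne_zero j
  rw [Lam, if_neg (Nat.not_even_iff_odd.mpr hr), if_pos j.isLt, ratio_val, tN_val, tN_val, lamN_val,
    lamN_val, ← mulCoord, ← mulCoord, weight, weight,
    show (j : ℤ) + 1 - r = j - r + 1 by ring, zpow_add_one₀ hj]
  field_simp

theorem Lam_last_of_odd (hr : Odd r) (lam : Fin r → ℕ) (i : Fin r) :
    Lam lam i r = weight lam i := by
  rw [Lam, if_neg (Nat.not_even_iff_odd.mpr hr), if_neg (lt_irrefl r), tN_val, lamN_val, ← mulCoord,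
    weight]

theorem pf_skew_Lam_of_even (n : ℕ) (lam : Fin (2 * n) → ℕ) :
    pf n (skew fun i j : Fin (2 * n) => Lam lam (i : ℕ) (j : ℕ)) =
      (∏ i, weight lam i) * upperProd fun i j => mulKernel (mulCoord i) (mulCoord j) := by
  have hskew : (skew fun i j : Fin (2 * n) => Lam lam (i : ℕ) (j : ℕ)) =
      fun i j => weight lam i * weight lam j * mulKernel (mulCoord i) (mulCoord j) :=
    skew_eq_of_lt (fun i j => by rw [mulKernel_antisymm]; ring)
      fun i j _ => Lam_of_even (even_two_mul n) lam i j
  rw [hskew, pf_mul_mul, pf_mulKernel mulCoord_mul_mulCoord_ne_one]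

theorem pf_skew_Lam_of_odd (n : ℕ) (lam : Fin (2 * n + 1) → ℕ) :
    pf (n + 1) (skew fun i j : Fin (2 * (n + 1)) => Lam lam (i : ℕ) (j : ℕ)) =
      (∏ i, weight lam i) * upperProd fun i j => mulKernel (mulCoord i) (mulCoord j) := by
  let u : Fin (2 * n + 2) → K (2 * n + 1) := Fin.snoc mulCoord 0
  let c : Fin (2 * n + 2) → K (2 * n + 1) := Fin.snoc (fun i => weight lam i / mulCoord i) 1
  have hu (i j : Fin (2 * n + 2)) : u i * u j ≠ 1 := by
    induction i using Fin.lastCases <;> induction j using Fin.lastCases <;>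
      simp [u, mulCoord_mul_mulCoord_ne_one]
  have hskew : (skew fun i j : Fin (2 * n + 2) => Lam lam (i : ℕ) (j : ℕ)) =
      fun i j => c i * c j * mulKernel (u i) (u j) := by
    refine skew_eq_of_lt (fun i j => by rw [mulKernel_antisymm]; ring) fun i j hij => ?_
    induction j using Fin.lastCases with
    | last =>
      obtain ⟨i, rfl⟩ := Fin.exists_castSucc_eq.mpr hij.ne
      simpa [u, c, mulKernel_zero_right, mulCoord_ne_zero] using
        Lam_last_of_odd (odd_two_mul_add_one n) lam i
    | cast j =>
      obtain ⟨i, rfl⟩ := Fin.exists_castSucc_eq.mpr (hij.trans (Fin.castSucc_lt_last j)).ne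
      simpa [u, c] using Lam_of_odd (odd_two_mul_add_one n) lam i j
  calc pf (n + 1) (skew fun i j : Fin (2 * n + 2) => Lam lam (i : ℕ) (j : ℕ))
      = (∏ i, c i) * upperProd fun i j => mulKernel (u i) (u j) := by
        rw [hskew]
        exact (pf_mul_mul (n := n + 1) c _).trans
          (congrArg ((∏ i, c i) * ·) (pf_mulKernel (n := n + 1) hu))
    _ = (∏ i, weight lam i / mulCoord i * mulCoord i) *
          upperProd fun i j => mulKernel (mulCoord i) (mulCoord j) := by
        rw [upperProd_castSucc, Fin.prod_univ_castSucc, prod_mul_distrib]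
        simp only [u, c, Fin.snoc_castSucc, Fin.snoc_last, mulKernel_zero_right]
        ring
    _ = _ := by simp only [div_mul_cancel₀ _ (mulCoord_ne_zero _)]

end RationalFunctions

theorem stmt8_general (r : ℕ) (lam : Fin r → ℕ) :
    (∏ i : Fin r, t i ^ lam i) *
        ∏ p ∈ Finset.univ.filter (fun p : Fin r × Fin r => p.1 < p.2),
          ratio r (p.1 : ℕ) (p.2 : ℕ) =
      pf ((r + 1) / 2)
        (skew fun i j : Fin (2 * ((r + 1) / 2)) => Lam lam (i : ℕ) (j : ℕ)) := by
  rw [prod_pow_mul_prod_ratio]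
  obtain ⟨n, rfl | rfl⟩ := Nat.even_or_odd' r
  · rw [show (2 * n + 1) / 2 = n by omega, pf_skew_Lam_of_even]
  · rw [show (2 * n + 1 + 1) / 2 = n + 1 by omega, pf_skew_Lam_of_odd]

/-- For a strict partition `λ_1 > … > λ_r > 0`, with `r'` the smallest
even integer `≥ r` (`r' = 2*((r+1)/2)`):
`t^λ ∏_{i<j} (1-t̄_i/t̄_j)/(1-t_i/t̄_j) = Pf(Λ_{i,j})_{1≤i<j≤r'}` in `ℚ(β,t)`. -/
theorem stmt8 (r : ℕ) (lam : Fin r → ℕ) (hpos : ∀ i, 0 < lam i) (hstrict : StrictAnti lam) :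
    (∏ i : Fin r, t i ^ lam i) *
        ∏ p ∈ Finset.univ.filter (fun p : Fin r × Fin r => p.1 < p.2),
          ratio r (p.1 : ℕ) (p.2 : ℕ) =
      pf ((r + 1) / 2)
        (skew fun i j : Fin (2 * ((r + 1) / 2)) => Lam lam (i : ℕ) (j : ℕ)) :=
  stmt8_general r lam

end Stmt8
end
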